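/- arXiv:2311.15119 — 3 statements merged into one kernel-verified Lean document; each statement's English description precedes it below -/
import Mathlib

section
/- Let h : ℝⁿ → ℝ be bounded and continuously differentiable and η : ℝⁿ → [0,∞) continuous. Set u_h(t,x) = (T_t h)(x) = exp(−v_t(x))·h(φ(t,x)). Then: (i) for each x, the map t ↦ u_h(t,x) is differentiable on (0,∞); (ii) for every t > 0 and x ∈ ℝⁿ, the map s ↦ u_h(t, φ(s,x)) is differentiable at s = 0 with derivative ∂ₜu_h(t,x) + η(x)·u_h(t,x); consequently, at any point x where y ↦ u_h(t,y) is differentiable, ∂ₜu_h(t,x) = ∇ₓu_h(t,x)·f(x) − η(x)·u_h(t,x); and (iii) u_h(0,x) = h(x) for all x. -/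
open Filter Topology MeasureTheory

noncomputable section

/-- The Zubov–Koopman operator `(T_t h)(x) = exp(−∫₀ᵗ η(φ(r,x)) dr) · h(φ(t,x))`,
i.e. `u_h(t,x)`. -/
def zubovKoopman {n : ℕ} (φ : ℝ → EuclideanSpace ℝ (Fin n) → EuclideanSpace ℝ (Fin n))
    (η : EuclideanSpace ℝ (Fin n) → ℝ) (t : ℝ) (h : EuclideanSpace ℝ (Fin n) → ℝ)
    (x : EuclideanSpace ℝ (Fin n)) : ℝ :=
  Real.exp (-(∫ r in (0:ℝ)..t, η (φ r x))) * h (φ t x)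

/-!
Along a trajectory, `u_h(·, x)` is the product of the exponential of an integral and `h(φ(·, x))`,
so it is differentiable in time by the fundamental theorem of calculus and the product rule. For the
spatial derivative, the semigroup law `T_{s+t} = T_s T_t` turns displacement along the flow into a
time shift: `u_h(t, φ(s, x)) = exp(∫₀ˢ η(φ(r, x)) dr) · u_h(s + t, x)`. Differentiating the
right-hand side at `s = 0` gives `∂ₜu_h + η u_h`, while the chain rule on the left-hand side gives
`∇u_h · f`.
-/

open Set

theorem hasDerivWithinAt_integral_Ici {G : Type*} [NormedAddCommGroup G] [NormedSpace ℝ G]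
    [CompleteSpace G] {g : ℝ → G} {a t : ℝ} (hg : ContinuousOn g (Ici a)) (ht : a ≤ t) :
    HasDerivWithinAt (fun s => ∫ r in a..s, g r) (g t) (Ici a) t := by
  have : Fact (t ∈ Icc a (t + 1)) := ⟨ht, by linarith⟩
  have hg_Icc : ContinuousOn g (Icc a (t + 1)) := hg.mono Icc_subset_Ici_self
  have h_Icc : HasDerivWithinAt (fun s => ∫ r in a..s, g r) (g t) (Icc a (t + 1)) t :=
    intervalIntegral.integral_hasDerivWithinAt_right
      ((hg.mono Icc_subset_Ici_self).intervalIntegrable_of_Icc ht)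
      (hg_Icc.stronglyMeasurableAtFilter_nhdsWithin measurableSet_Icc t) (hg_Icc t this.out)
  refine h_Icc.mono_of_mem_nhdsWithin ?_
  rw [← Ici_inter_Iic]
  exact inter_mem self_mem_nhdsWithin (mem_nhdsWithin_of_mem_nhds (Iic_mem_nhds (by linarith)))

variable {E F : Type*} [NormedAddCommGroup F] [NormedSpace ℝ F]

/-- The Zubov–Koopman operator on observables `h : E → F` with values in a real normed space, over
an arbitrary state space `E`; `zubovKoopman` is the case `E = ℝⁿ`, `F = ℝ`. Time is all of `ℝ`, but
for a semiflow `φ` only `t ≥ 0` is meaningful. -/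
def weightedKoopman (φ : ℝ → E → E) (η : E → ℝ) (t : ℝ) (h : E → F) (x : E) : F :=
  Real.exp (-(∫ r in (0 : ℝ)..t, η (φ r x))) • h (φ t x)

namespace weightedKoopman

variable {φ : ℝ → E → E} {η : E → ℝ} {h : E → F} {s t : ℝ} {x : E}

theorem zero_apply (hφ0 : φ 0 x = x) : weightedKoopman φ η 0 h x = h x := by
  simp [weightedKoopman, hφ0]

theorem add_apply (hφadd : ∀ r ∈ uIcc 0 t, φ r (φ s x) = φ (s + r) x)
    (hs : IntervalIntegrable (fun r => η (φ r x)) volume 0 s)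
    (hst : IntervalIntegrable (fun r => η (φ r x)) volume s (s + t)) :
    weightedKoopman φ η (s + t) h x = weightedKoopman φ η s (weightedKoopman φ η t h) x := by
  have integral_shift : ∫ r in (0 : ℝ)..t, η (φ r (φ s x)) = ∫ r in s..s + t, η (φ r x) := by
    calc ∫ r in (0 : ℝ)..t, η (φ r (φ s x))
      _ = ∫ r in (0 : ℝ)..t, η (φ (s + r) x) :=
        intervalIntegral.integral_congr fun r hr => congrArg η (hφadd r hr)
      _ = ∫ r in s..s + t, η (φ r x) := by
        rw [intervalIntegral.integral_comp_add_left (fun r => η (φ r x)), add_zero]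
  simp only [weightedKoopman]
  rw [integral_shift, hφadd t right_mem_uIcc, smul_smul, ← Real.exp_add, ← neg_add,
    intervalIntegral.integral_add_adjacent_intervals hs hst]

theorem apply_flow_eq (hφadd : ∀ r ∈ uIcc 0 t, φ r (φ s x) = φ (s + r) x)
    (hs : IntervalIntegrable (fun r => η (φ r x)) volume 0 s)
    (hst : IntervalIntegrable (fun r => η (φ r x)) volume s (s + t)) :
    weightedKoopman φ η t h (φ s x) =
      Real.exp (∫ r in (0 : ℝ)..s, η (φ r x)) • weightedKoopman φ η (s + t) h x := by
  calc weightedKoopman φ η t h (φ s x)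
    _ = Real.exp (∫ r in (0 : ℝ)..s, η (φ r x)) •
          weightedKoopman φ η s (weightedKoopman φ η t h) x := by
      rw [weightedKoopman.eq_def φ η s, smul_smul, ← Real.exp_add, add_neg_cancel, Real.exp_zero,
        one_smul]
    _ = _ := by rw [add_apply hφadd hs hst]

theorem hasDerivWithinAt_time {w : F} (hη : ContinuousOn (fun r => η (φ r x)) (Ici 0))
    (ht : 0 ≤ t) (hw : HasDerivWithinAt (fun s => h (φ s x)) w (Ici 0) t) :
    HasDerivWithinAt (fun s => weightedKoopman φ η s h x)
      (Real.exp (-(∫ r in (0 : ℝ)..t, η (φ r x))) • (w - η (φ t x) • h (φ t x))) (Ici 0) t := by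
  have h_exp := (hasDerivWithinAt_integral_Ici hη ht).fun_neg.exp
  refine (h_exp.fun_smul hw).congr_deriv ?_
  module

theorem hasDerivWithinAt_apply_flow {w : F} (hφ0 : φ 0 x = x)
    (hφadd : ∀ s ≥ 0, ∀ r ≥ 0, φ r (φ s x) = φ (s + r) x)
    (hη : ContinuousOn (fun r => η (φ r x)) (Ici 0)) (ht : 0 ≤ t)
    (hw : HasDerivWithinAt (fun s => weightedKoopman φ η s h x) w (Ici 0) t) :
    HasDerivWithinAt (fun s => weightedKoopman φ η t h (φ s x))
      (w + η x • weightedKoopman φ η t h x) (Ici 0) 0 := by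
  have h_int : ∀ a b : ℝ, 0 ≤ a → a ≤ b → IntervalIntegrable (fun r => η (φ r x)) volume a b :=
    fun a b ha hab => (hη.mono fun r hr => ha.trans hr.1).intervalIntegrable_of_Icc hab
  have h_shift : ∀ s ∈ Ici (0 : ℝ), weightedKoopman φ η t h (φ s x) =
      Real.exp (∫ r in (0 : ℝ)..s, η (φ r x)) • weightedKoopman φ η (s + t) h x := by
    intro s hs
    refine apply_flow_eq (fun r hr => hφadd s hs r ?_) (h_int 0 s le_rfl hs)
      (h_int s (s + t) hs (le_add_of_nonneg_right ht))
    exact (uIcc_of_le ht ▸ hr).1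
  have h_exp := (hasDerivWithinAt_integral_Ici hη le_rfl).exp
  have h_time : HasDerivWithinAt (fun s => weightedKoopman φ η (s + t) h x) w (Ici 0) 0 := by
    have h_maps : MapsTo (fun s => s + t) (Ici 0) (Ici 0) := fun s hs => add_nonneg hs ht
    simpa only [one_smul, Function.comp_def] using HasDerivWithinAt.scomp_of_eq (0 : ℝ) hw
      ((hasDerivAt_id' (0 : ℝ)).add_const t).hasDerivWithinAt h_maps (zero_add t).symm
  refine ((h_exp.fun_smul h_time).congr_of_mem h_shift self_mem_Ici).congr_deriv ?_
  simp only [intervalIntegral.integral_same, Real.exp_zero, zero_add, hφ0, one_mul, one_smul]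

end weightedKoopman

theorem zubovKoopman_solves_cauchy_problem_general [NormedAddCommGroup E] [NormedSpace ℝ E]
    (f : E → E) (φ : ℝ → E → E)
    (hφ0 : ∀ x, φ 0 x = x)
    (hφd : ∀ x, ∀ t ≥ (0 : ℝ), HasDerivWithinAt (fun s => φ s x) (f (φ t x)) (Ici 0) t)
    (hφadd : ∀ x, ∀ s ≥ (0 : ℝ), ∀ t ≥ (0 : ℝ), φ s (φ t x) = φ (t + s) x)
    (η : E → ℝ) (hη : Continuous η) (h : E → F) (hh : Differentiable ℝ h) :
    (∀ x, ∀ t > (0 : ℝ), DifferentiableAt ℝ (fun s => weightedKoopman φ η s h x) t) ∧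
    (∀ t > (0 : ℝ), ∀ x,
      HasDerivWithinAt (fun s => weightedKoopman φ η t h (φ s x))
        (deriv (fun s => weightedKoopman φ η s h x) t + η x • weightedKoopman φ η t h x)
        (Ici 0) 0) ∧
    (∀ t > (0 : ℝ), ∀ x, DifferentiableAt ℝ (weightedKoopman φ η t h) x →
      deriv (fun s => weightedKoopman φ η s h x) t =
        fderiv ℝ (weightedKoopman φ η t h) x (f x) - η x • weightedKoopman φ η t h x) ∧
    (∀ x, weightedKoopman φ η 0 h x = h x) := by
  have hη_traj : ∀ x, ContinuousOn (fun r => η (φ r x)) (Ici 0) := fun x =>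
    hη.comp_continuousOn fun t ht => (hφd x t ht).continuousWithinAt
  have h_time : ∀ x, ∀ t > (0 : ℝ), DifferentiableAt ℝ (fun s => weightedKoopman φ η s h x) t :=
    fun x t ht => ((weightedKoopman.hasDerivWithinAt_time (hη_traj x) ht.le
      ((hh (φ t x)).hasFDerivAt.comp_hasDerivWithinAt t (hφd x t ht.le))).hasDerivAt
        (Ici_mem_nhds ht)).differentiableAt
  have h_flow : ∀ t > (0 : ℝ), ∀ x, HasDerivWithinAt (fun s => weightedKoopman φ η t h (φ s x))
      (deriv (fun s => weightedKoopman φ η s h x) t + η x • weightedKoopman φ η t h x)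
      (Ici 0) 0 := fun t ht x =>
    weightedKoopman.hasDerivWithinAt_apply_flow (hφ0 x) (fun s hs r hr => hφadd x r hr s hs)
      (hη_traj x) ht.le (h_time x t ht).hasDerivAt.hasDerivWithinAt
  refine ⟨h_time, h_flow, fun t ht x hd => ?_, fun x => weightedKoopman.zero_apply (hφ0 x)⟩
  have h_chain : HasDerivWithinAt (fun s => weightedKoopman φ η t h (φ s x))
      (fderiv ℝ (weightedKoopman φ η t h) x (f x)) (Ici 0) 0 :=
    hd.hasFDerivAt.comp_hasDerivWithinAt_of_eq 0 (by simpa only [hφ0] using hφd x 0 le_rfl)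
      (hφ0 x).symm
  exact eq_sub_of_add_eq (((uniqueDiffOn_Ici 0).uniqueDiffWithinAt self_mem_Ici).eq_deriv _
    (h_flow t ht x) h_chain)

/-- for bounded `C¹` `h` and continuous nonnegative `η`,
`u_h(t,x) = (T_t h)(x)` satisfies: (i) `t ↦ u_h(t,x)` is differentiable on `(0,∞)`;
(ii) `s ↦ u_h(t, φ(s,x))` is differentiable at `s = 0` (from the right) with derivative
`∂ₜu_h(t,x) + η(x)·u_h(t,x)`, and consequently wherever `y ↦ u_h(t,y)` is differentiable,
`∂ₜu_h(t,x) = ∇ₓu_h(t,x)·f(x) − η(x)·u_h(t,x)`; and (iii) `u_h(0,x) = h(x)`. -/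
theorem zubovKoopman_solves_cauchy_problem {n : ℕ}
    (f : EuclideanSpace ℝ (Fin n) → EuclideanSpace ℝ (Fin n))
    (φ : ℝ → EuclideanSpace ℝ (Fin n) → EuclideanSpace ℝ (Fin n))
    (hf : LocallyLipschitz f)
    (hφ0 : ∀ x, φ 0 x = x)
    (hφd : ∀ x, ∀ t ≥ (0:ℝ), HasDerivWithinAt (fun s => φ s x) (f (φ t x)) (Set.Ici 0) t)
    (hφadd : ∀ x, ∀ s ≥ (0:ℝ), ∀ t ≥ (0:ℝ), φ s (φ t x) = φ (t + s) x)
    (η : EuclideanSpace ℝ (Fin n) → ℝ)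
    (hη : Continuous η) (hηnn : ∀ x, 0 ≤ η x)
    (h : EuclideanSpace ℝ (Fin n) → ℝ)
    (hh : ContDiff ℝ 1 h) (hhb : ∃ C, ∀ x, |h x| ≤ C) :
    -- (i)
    (∀ x, ∀ t > (0:ℝ), DifferentiableAt ℝ (fun s => zubovKoopman φ η s h x) t) ∧
    -- (ii)
    (∀ t > (0:ℝ), ∀ x,
      HasDerivWithinAt (fun s => zubovKoopman φ η t h (φ s x))
        (deriv (fun s => zubovKoopman φ η s h x) t + η x * zubovKoopman φ η t h x)
        (Set.Ici 0) 0) ∧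
    (∀ t > (0:ℝ), ∀ x, DifferentiableAt ℝ (fun y => zubovKoopman φ η t h y) x →
      deriv (fun s => zubovKoopman φ η s h x) t =
        fderiv ℝ (fun y => zubovKoopman φ η t h y) x (f x)
          - η x * zubovKoopman φ η t h x) ∧
    -- (iii)
    (∀ x, zubovKoopman φ η 0 h x = h x) := by
  exact zubovKoopman_solves_cauchy_problem_general f φ hφ0 hφd hφadd η hη h
    (hh.differentiable one_ne_zero)
end
end

section
/- Let h : ℝⁿ → ℝ be bounded and continuously differentiable and η : ℝⁿ → [0,∞) continuous. If u : [0,∞) × ℝⁿ → ℝ is continuously differentiable in (t,x) and satisfies ∂ₜu(t,x) = ∇ₓu(t,x)·f(x) − η(x)·u(t,x) for all t > 0 and x ∈ ℝⁿ, together with u(0,x) = h(x) for all x, then u(t,x) = exp(−v_t(x))·h(φ(t,x)) = (T_t h)(x) for all t ≥ 0 and all x ∈ ℝⁿ. -/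
open Filter Topology MeasureTheory

noncomputable section

/-!
Along an integral curve `γ` of `f`, the chain rule turns the equation for `u` into the scalar-linear
equation `w' = η(γ(s)) w` for `w(s) = u(t - s, γ(s))`. Its solution
`w(t) = exp(∫₀ᵗ η(γ(r)) dr) w(0)` joins the initial value `w(t) = u(0, γ(t))` to
`w(0) = u(t, γ(0))`.
-/

section Characteristics

open Set Function

variable {E F : Type*} [NormedAddCommGroup E] [NormedSpace ℝ E]
  [NormedAddCommGroup F] [NormedSpace ℝ F]

theorem hasDerivWithinAt_integral_Ici_of_continuousOn_Icc [CompleteSpace F] {c : ℝ → F} {a b s : ℝ}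
    (hc : ContinuousOn c (Icc a b)) (hs : s ∈ Ico a b) :
    HasDerivWithinAt (fun r => ∫ x in a..r, c x) (c s) (Ici s) s := by
  have hsub : Icc a b ∈ 𝓝[>] s :=
    nhdsWithin_mono s Ioi_subset_Ici_self (Icc_mem_nhdsGE_of_mem hs)
  have hint : IntervalIntegrable c volume a s :=
    (hc.mono (Icc_subset_Icc_right hs.2.le)).intervalIntegrable_of_Icc hs.1
  have hmeas : StronglyMeasurableAtFilter c (𝓝[>] s) :=
    (hc.stronglyMeasurableAtFilter_nhdsWithin measurableSet_Icc s).filter_mono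
      (nhdsWithin_le_of_mem hsub)
  exact intervalIntegral.integral_hasDerivWithinAt_right hint hmeas
    ((hc s (Ico_subset_Icc_self hs)).mono_of_mem_nhdsWithin hsub)

theorem eq_exp_integral_smul_of_hasDerivWithinAt {w : ℝ → F} {c : ℝ → ℝ} {a b : ℝ} (hab : a ≤ b)
    (hc : ContinuousOn c (Icc a b)) (hw : ContinuousOn w (Icc a b))
    (hw' : ∀ s ∈ Ico a b, HasDerivWithinAt w (c s • w s) (Ici s) s) :
    w b = Real.exp (∫ s in a..b, c s) • w a := by
  let C : ℝ → ℝ := fun s => ∫ r in a..s, c r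
  have hC : ContinuousOn C (Icc a b) := by
    rw [← uIcc_of_le hab] at hc ⊢
    exact intervalIntegral.continuousOn_primitive_interval hc.integrableOn_uIcc
  have hderiv : ∀ s ∈ Ico a b,
      HasDerivWithinAt (fun r => Real.exp (-C r) • w r) 0 (Ici s) s := fun s hs => by
    have hCs : HasDerivWithinAt C (c s) (Ici s) s :=
      hasDerivWithinAt_integral_Ici_of_continuousOn_Icc hc hs
    refine (hCs.fun_neg.exp.smul (hw' s hs)).congr_deriv ?_
    module
  have hconst : Real.exp (-C b) • w b = w a := by
    simpa [C] using
      constant_of_has_deriv_right_zero (hC.neg.rexp.smul hw) hderiv b (right_mem_Icc.2 hab)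
  rw [← hconst, smul_smul, ← Real.exp_add, add_neg_cancel, Real.exp_zero, one_smul]

theorem hasDerivWithinAt_uncurry_comp {u : ℝ → E → F} {τ : ℝ → ℝ} {γ : ℝ → E} {τ' : ℝ} {γ' : E}
    {S : Set ℝ} {s : ℝ} (hu : DifferentiableAt ℝ (uncurry u) (τ s, γ s))
    (hτ : HasDerivWithinAt τ τ' S s) (hγ : HasDerivWithinAt γ γ' S s) :
    HasDerivWithinAt (fun r => u (τ r) (γ r))
      (τ' • deriv (fun r => u r (γ s)) (τ s) + fderiv ℝ (fun y => u (τ s) y) (γ s) γ') S s := by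
  obtain ⟨L, hL⟩ := hu
  have htime : deriv (fun r => u r (γ s)) (τ s) = L (1, 0) :=
    (hL.comp_hasDerivAt (f := fun r => (r, γ s)) (τ s)
      ((hasDerivAt_id _).prodMk (hasDerivAt_const _ _))).deriv
  have hspace : fderiv ℝ (fun y => u (τ s) y) (γ s) = L.comp (.inr ℝ ℝ E) :=
    (hL.comp (f := fun y => (τ s, y)) (γ s) (hasFDerivAt_prodMk_right _ _)).fderiv
  have hsplit : L (τ', γ') = τ' • L (1, 0) + L (0, γ') := by
    rw [← map_smul, ← map_add]
    simp only [Prod.smul_mk, smul_eq_mul, mul_one, smul_zero, Prod.mk_add_mk, add_zero, zero_add]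
  rw [htime, hspace, ContinuousLinearMap.comp_apply, ContinuousLinearMap.inr_apply, ← hsplit]
  exact hL.comp_hasDerivWithinAt (f := fun r => (τ r, γ r)) s (hτ.prodMk hγ)

theorem zubovKoopman_uniqueness_feynman_kac_general {f : E → E} {η : E → ℝ} (hη : Continuous η)
    {u : ℝ → E → F} (hu : ContinuousOn (uncurry u) (Ici 0 ×ˢ univ))
    (hu' : DifferentiableOn ℝ (uncurry u) (Ioi 0 ×ˢ univ))
    (hpde : ∀ t > 0, ∀ x, deriv (fun s => u s x) t =
      fderiv ℝ (fun y => u t y) x (f x) - η x • u t x)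
    {γ : ℝ → E} {t : ℝ} (ht : 0 ≤ t) (hγ : IsIntegralCurveOn γ (fun _ => f) (Icc 0 t)) :
    u t (γ 0) = Real.exp (-∫ r in (0:ℝ)..t, η (γ r)) • u 0 (γ t) := by
  let w : ℝ → F := fun s => u (t - s) (γ s)
  have hw : ContinuousOn w (Icc 0 t) :=
    hu.comp ((continuousOn_const.sub continuousOn_id).prodMk hγ.continuousOn)
      fun s hs => ⟨sub_nonneg.2 hs.2, mem_univ _⟩
  have hw' : ∀ s ∈ Ico 0 t, HasDerivWithinAt w (η (γ s) • w s) (Ici s) s := fun s hs => by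
    have hts : 0 < t - s := sub_pos.2 hs.2
    have hdiff : DifferentiableAt ℝ (uncurry u) (t - s, γ s) :=
      hu'.differentiableAt ((isOpen_Ioi.prod isOpen_univ).mem_nhds ⟨hts, mem_univ _⟩)
    have hγs : HasDerivWithinAt γ (f (γ s)) (Ici s) s :=
      (hγ s (Ico_subset_Icc_self hs)).mono_of_mem_nhdsWithin (Icc_mem_nhdsGE_of_mem hs)
    have htime : HasDerivWithinAt (fun r => t - r) (-1) (Ici s) s :=
      (hasDerivWithinAt_id s _).const_sub t
    refine (hasDerivWithinAt_uncurry_comp hdiff htime hγs).congr_deriv ?_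
    rw [hpde _ hts]
    module
  have hsol : u 0 (γ t) = Real.exp (∫ r in (0:ℝ)..t, η (γ r)) • u t (γ 0) := by
    simpa only [w, sub_self, sub_zero, comp_apply] using
      eq_exp_integral_smul_of_hasDerivWithinAt ht (hη.comp_continuousOn hγ.continuousOn) hw hw'
  rw [hsol, smul_smul, ← Real.exp_add, neg_add_cancel, Real.exp_zero, one_smul]

end Characteristics

/-- uniqueness part of the Feynman–Kac characterization: any `C^{1,1}`
solution `u` of `∂ₜu = ∇ₓu·f − η·u` on `(0,∞) × ℝⁿ` with `u(0,·) = h` is given by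
`u(t,x) = (T_t h)(x) = exp(−v_t(x))·h(φ(t,x))`. -/
theorem zubovKoopman_uniqueness_feynman_kac {n : ℕ}
    (f : EuclideanSpace ℝ (Fin n) → EuclideanSpace ℝ (Fin n))
    (φ : ℝ → EuclideanSpace ℝ (Fin n) → EuclideanSpace ℝ (Fin n))
    (hf : LocallyLipschitz f)
    (hφ0 : ∀ x, φ 0 x = x)
    (hφd : ∀ x, ∀ t ≥ (0:ℝ), HasDerivWithinAt (fun s => φ s x) (f (φ t x)) (Set.Ici 0) t)
    (hφadd : ∀ x, ∀ s ≥ (0:ℝ), ∀ t ≥ (0:ℝ), φ s (φ t x) = φ (t + s) x)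
    (η : EuclideanSpace ℝ (Fin n) → ℝ)
    (hη : Continuous η) (hηnn : ∀ x, 0 ≤ η x)
    (h : EuclideanSpace ℝ (Fin n) → ℝ)
    (hh : ContDiff ℝ 1 h) (hhb : ∃ C, ∀ x, |h x| ≤ C)
    (u : ℝ → EuclideanSpace ℝ (Fin n) → ℝ)
    (hu : ContDiffOn ℝ 1 (fun p : ℝ × EuclideanSpace ℝ (Fin n) => u p.1 p.2)
      (Set.Ici (0:ℝ) ×ˢ Set.univ))
    (hpde : ∀ t > (0:ℝ), ∀ x, deriv (fun s => u s x) t =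
      fderiv ℝ (fun y => u t y) x (f x) - η x * u t x)
    (hinit : ∀ x, u 0 x = h x) :
    ∀ t ≥ (0:ℝ), ∀ x, u t x = zubovKoopman φ η t h x := by
  intro t ht x
  simpa only [hφ0, hinit, smul_eq_mul, zubovKoopman] using
    zubovKoopman_uniqueness_feynman_kac_general (γ := fun s => φ s x) hη hu.continuousOn
      ((hu.differentiableOn one_ne_zero).mono (Set.prod_mono_left Set.Ioi_subset_Ici_self))
      hpde ht fun s hs => (hφd x s hs.1).mono Set.Icc_subset_Ici_self
end
end

section
/- For every bounded continuous h : ℝⁿ → ℝ and every x ∈ ℝⁿ, (T_t h)(x) → U_h(x) as t → ∞. In particular, for any fixed Δt > 0, the iterates satisfy ((T_{Δt})^k h)(x) = (T_{kΔt} h)(x) → U_h(x) as k → ∞. -/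
/-!
Along each orbit the running cost `v_t(x)` increases to `V(x)`, so the weight `exp(-v_t(x))`
converges to `exp(-V(x))`, read as `0` when `V(x) = ∞`. In the latter case a bounded `h` is damped
to zero. If `V(x) < ∞`, the orbit cannot stay where `η` is bounded below by a positive constant,
since that would cost infinitely much over an infinite time; hence it enters the region attracted to
the equilibrium, and `h(φ(t,x)) → h(x_eq)`. For the iterates, additivity of `v` along orbits makes
`T` a semigroup.
-/

open Filter Topology MeasureTheory
open scoped ENNReal

noncomputable section

/-- `V(x) = ∫₀^∞ η(φ(t,x)) dt`, with value `∞` if the integral diverges. -/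
def zubovV {n : ℕ} (φ : ℝ → EuclideanSpace ℝ (Fin n) → EuclideanSpace ℝ (Fin n))
    (η : EuclideanSpace ℝ (Fin n) → ℝ) (x : EuclideanSpace ℝ (Fin n)) : ℝ≥0∞ :=
  ∫⁻ t in Set.Ioi (0:ℝ), ENNReal.ofReal (η (φ t x))

/-- `U_h(x) = exp(−V(x))·h(x_eq)` when `V(x) < ∞`, and `U_h(x) = 0` otherwise. -/
def zubovU {n : ℕ} (φ : ℝ → EuclideanSpace ℝ (Fin n) → EuclideanSpace ℝ (Fin n))
    (η : EuclideanSpace ℝ (Fin n) → ℝ) (xeq : EuclideanSpace ℝ (Fin n))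
    (h : EuclideanSpace ℝ (Fin n) → ℝ) (x : EuclideanSpace ℝ (Fin n)) : ℝ :=
  if zubovV φ η x < ⊤ then Real.exp (-(zubovV φ η x).toReal) * h xeq else 0

theorem tendsto_ofReal_intervalIntegral_atTop {g : ℝ → ℝ} {a : ℝ}
    (hint : ∀ t ≥ a, IntervalIntegrable g volume a t) (hg : ∀ t, 0 ≤ g t) :
    Tendsto (fun t ↦ ENNReal.ofReal (∫ r in a..t, g r)) atTop
      (𝓝 (∫⁻ r in Set.Ioi a, ENNReal.ofReal (g r))) := by
  have hmeas : AEMeasurable g (volume.restrict (Set.Ioi a)) :=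
    aemeasurable_Ioi_of_forall_Ioc fun t ht ↦ (hint t ht.le).1.aemeasurable
  refine ((aecover_Iic tendsto_id).lintegral_tendsto_of_countably_generated
    hmeas.ennreal_ofReal).congr' ?_
  filter_upwards [eventually_ge_atTop a] with t hat
  rw [intervalIntegral.integral_of_le hat, ofReal_integral_eq_lintegral_ofReal (hint t hat).1
    (Eventually.of_forall hg), Measure.restrict_restrict measurableSet_Iic, Set.inter_comm,
    Set.Ioi_inter_Iic, id]

theorem exists_lt_of_setLIntegral_ne_top {α : Type*} [MeasurableSpace α] {μ : Measure α}
    {s : Set α} {g : α → ℝ≥0∞} {c : ℝ≥0∞} (hs : MeasurableSet s) (hμs : μ s = ⊤)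
    (hg : ∫⁻ a in s, g a ∂μ ≠ ⊤) (hc : c ≠ 0) : ∃ a ∈ s, g a < c := by
  by_contra! hcg
  refine hg (top_le_iff.1 ?_)
  calc ⊤ = ∫⁻ _ in s, c ∂μ := by rw [setLIntegral_const, hμs, ENNReal.mul_top hc]
    _ ≤ ∫⁻ a in s, g a ∂μ := setLIntegral_mono' hs hcg

theorem tendsto_exp_neg_mul_of_tendsto_ofReal {ι : Type*} {l : Filter ι} {v u : ι → ℝ}
    {L : ℝ≥0∞} {b C : ℝ} (hv0 : ∀ᶠ i in l, 0 ≤ v i)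
    (hv : Tendsto (fun i ↦ ENNReal.ofReal (v i)) l (𝓝 L)) (huC : ∀ i, |u i| ≤ C)
    (hub : L ≠ ⊤ → Tendsto u l (𝓝 b)) :
    Tendsto (fun i ↦ Real.exp (-v i) * u i) l
      (𝓝 (if L < ⊤ then Real.exp (-L.toReal) * b else 0)) := by
  split_ifs with hL
  · have hvL : Tendsto v l (𝓝 L.toReal) :=
      ((ENNReal.tendsto_toReal hL.ne).comp hv).congr' <|
        hv0.mono fun i hi ↦ ENNReal.toReal_ofReal hi
    exact hvL.neg.rexp.mul (hub hL.ne)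
  · rw [not_lt_top_iff.1 hL, ENNReal.tendsto_ofReal_nhds_top] at hv
    simpa only [mul_comm, Function.comp_apply] using
      bdd_le_mul_tendsto_zero' C (Eventually.of_forall huC)
        (Real.tendsto_exp_neg_atTop_nhds_zero.comp hv)

theorem tendsto_of_norm_sub_le_mul_exp {E : Type*} [SeminormedAddCommGroup E] {γ : ℝ → E} {p : E}
    {K c : ℝ} (hc : 0 < c) (hγ : ∀ t ≥ 0, ‖γ t - p‖ ≤ K * Real.exp (-c * t)) :
    Tendsto γ atTop (𝓝 p) := by
  have hexp : Tendsto (fun t ↦ K * Real.exp (-c * t)) atTop (𝓝 0) := by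
    simpa using (Real.tendsto_exp_atBot.comp
      (tendsto_id.const_mul_atTop_of_neg (neg_lt_zero.2 hc))).const_mul K
  exact tendsto_iff_norm_sub_tendsto_zero.2 <| squeeze_zero' (Eventually.of_forall fun _ ↦
    norm_nonneg _) ((eventually_ge_atTop 0).mono hγ) hexp

section Semiflow

variable {X : Type*} {φ : ℝ → X → X} {η h : X → ℝ} {x : X}

/-- The cost `v_t(x)` accumulated up to time `t` along the orbit of `x`, for the running cost `η`;
it is a Bochner integral, hence `0` if `η` is not integrable along the orbit. -/
def runningCost (φ : ℝ → X → X) (η : X → ℝ) (t : ℝ) (x : X) : ℝ :=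
  ∫ r in (0 : ℝ)..t, η (φ r x)

/-- The cost `V(x)` of the whole forward orbit of `x`, the analogue of `zubovV` on an arbitrary
state space; negative values of `η` count as `0`. -/
def totalCost (φ : ℝ → X → X) (η : X → ℝ) (x : X) : ℝ≥0∞ :=
  ∫⁻ t in Set.Ioi (0 : ℝ), ENNReal.ofReal (η (φ t x))

/-- The Koopman operator discounted by the running cost, the analogue of `zubovKoopman` on an
arbitrary state space. -/
def discountedKoopman (φ : ℝ → X → X) (η : X → ℝ) (t : ℝ) (h : X → ℝ) (x : X) : ℝ :=
  Real.exp (-runningCost φ η t x) * h (φ t x)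

/-- The value of `h` at the equilibrium `p` discounted by the total cost, the analogue of `zubovU`
on an arbitrary state space; an infinite cost discounts to `0`. -/
def discountedLimit (φ : ℝ → X → X) (η : X → ℝ) (p : X) (h : X → ℝ) (x : X) : ℝ :=
  if totalCost φ η x < ⊤ then Real.exp (-(totalCost φ η x).toReal) * h p else 0

theorem runningCost_add {s t : ℝ} (hφadd : ∀ r ≥ 0, φ r (φ s x) = φ (s + r) x)
    (hint : ∀ b ≥ 0, IntervalIntegrable (fun r ↦ η (φ r x)) volume 0 b)
    (hs : 0 ≤ s) (ht : 0 ≤ t) :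
    runningCost φ η (s + t) x = runningCost φ η s x + runningCost φ η t (φ s x) := by
  have hshift : runningCost φ η t (φ s x) = ∫ r in s..s + t, η (φ r x) := by
    calc runningCost φ η t (φ s x) = ∫ r in (0 : ℝ)..t, η (φ (s + r) x) :=
          intervalIntegral.integral_congr fun r hr ↦ by
            rw [Set.uIcc_of_le ht] at hr
            exact congrArg η (hφadd r hr.1)
      _ = ∫ r in s..s + t, η (φ r x) := by
          rw [intervalIntegral.integral_comp_add_left (fun r ↦ η (φ r x)), add_zero]
  rw [hshift]
  exact (intervalIntegral.integral_add_adjacent_intervals (hint s hs)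
    ((hint s hs).symm.trans (hint _ (add_nonneg hs ht)))).symm

theorem discountedKoopman_add (hφadd : ∀ x, ∀ s ≥ 0, ∀ t ≥ 0, φ s (φ t x) = φ (t + s) x)
    (hint : ∀ x, ∀ t ≥ 0, IntervalIntegrable (fun r ↦ η (φ r x)) volume 0 t) {s t : ℝ}
    (hs : 0 ≤ s) (ht : 0 ≤ t) :
    discountedKoopman φ η (s + t) h = discountedKoopman φ η s (discountedKoopman φ η t h) := by
  funext x
  simp only [discountedKoopman, runningCost_add (fun r hr ↦ hφadd x r hr s hs) (hint x) hs ht,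
    hφadd x t ht s hs, neg_add, Real.exp_add, mul_assoc]

theorem discountedKoopman_iterate (hφ0 : ∀ x, φ 0 x = x)
    (hφadd : ∀ x, ∀ s ≥ 0, ∀ t ≥ 0, φ s (φ t x) = φ (t + s) x)
    (hint : ∀ x, ∀ t ≥ 0, IntervalIntegrable (fun r ↦ η (φ r x)) volume 0 t) {τ : ℝ}
    (hτ : 0 ≤ τ) (k : ℕ) :
    (discountedKoopman φ η τ)^[k] h = discountedKoopman φ η (k * τ) h := by
  induction k with
  | zero => funext x; simp [discountedKoopman, runningCost, hφ0]
  | succ k ih =>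
    rw [Function.iterate_succ_apply', ih, ← discountedKoopman_add hφadd hint hτ (by positivity)]
    congr 1
    push_cast
    ring

theorem exists_orbit_mem_of_totalCost_ne_top {N : Set X} {m : ℝ} (hm : 0 < m)
    (hηm : ∀ y ∉ N, m ≤ η y) (hV : totalCost φ η x ≠ ⊤) : ∃ t > 0, φ t x ∈ N := by
  obtain ⟨t, ht, hηt⟩ := exists_lt_of_setLIntegral_ne_top measurableSet_Ioi Real.volume_Ioi hV
    (ENNReal.ofReal_pos.2 hm).ne'
  refine ⟨t, ht, ?_⟩
  by_contra htN
  exact hηt.not_ge (ENNReal.ofReal_le_ofReal (hηm _ htN))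

variable [TopologicalSpace X] {p : X} {N : Set X} {m : ℝ}

theorem tendsto_orbit_of_tendsto_orbit_apply {s : ℝ}
    (hφadd : ∀ t ≥ 0, φ t (φ s x) = φ (s + t) x)
    (hs : Tendsto (fun t ↦ φ t (φ s x)) atTop (𝓝 p)) :
    Tendsto (fun t ↦ φ t x) atTop (𝓝 p) := by
  refine (hs.comp (tendsto_atTop_add_const_right atTop (-s) tendsto_id)).congr' ?_
  filter_upwards [eventually_ge_atTop s] with t hst
  simpa using hφadd (t + -s) (by linarith)

theorem discountedKoopman_tendsto_discountedLimit
    (hφadd : ∀ s ≥ 0, ∀ t ≥ 0, φ s (φ t x) = φ (t + s) x)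
    (hint : ∀ t ≥ 0, IntervalIntegrable (fun r ↦ η (φ r x)) volume 0 t) (hη : ∀ y, 0 ≤ η y)
    (hN : ∀ y ∈ N, Tendsto (fun t ↦ φ t y) atTop (𝓝 p)) (hm : 0 < m) (hηm : ∀ y ∉ N, m ≤ η y)
    (hcont : ContinuousAt h p) (hbdd : ∃ C, ∀ y, |h y| ≤ C) :
    Tendsto (fun t ↦ discountedKoopman φ η t h x) atTop (𝓝 (discountedLimit φ η p h x)) := by
  obtain ⟨C, hC⟩ := hbdd
  have hcost : ∀ᶠ t in atTop, 0 ≤ runningCost φ η t x := (eventually_ge_atTop 0).mono fun t ht ↦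
    intervalIntegral.integral_nonneg_of_forall ht fun r ↦ hη (φ r x)
  refine tendsto_exp_neg_mul_of_tendsto_ofReal hcost
    (tendsto_ofReal_intervalIntegral_atTop hint fun r ↦ hη (φ r x)) (fun t ↦ hC (φ t x)) fun hV ↦ ?_
  obtain ⟨s, hs, hsN⟩ := exists_orbit_mem_of_totalCost_ne_top hm hηm hV
  exact hcont.tendsto.comp <| tendsto_orbit_of_tendsto_orbit_apply
    (fun t ht ↦ hφadd t ht s hs.le) (hN _ hsN)

theorem zubovKoopman_tendsto_zubovU_general (hφ0 : ∀ x, φ 0 x = x)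
    (hφadd : ∀ x, ∀ s ≥ 0, ∀ t ≥ 0, φ s (φ t x) = φ (t + s) x)
    (hint : ∀ x, ∀ t ≥ 0, IntervalIntegrable (fun r ↦ η (φ r x)) volume 0 t) (hη : ∀ y, 0 ≤ η y)
    (hN : ∀ y ∈ N, Tendsto (fun t ↦ φ t y) atTop (𝓝 p)) (hm : 0 < m) (hηm : ∀ y ∉ N, m ≤ η y)
    (hcont : ContinuousAt h p) (hbdd : ∃ C, ∀ y, |h y| ≤ C) (x : X) :
    Tendsto (fun t ↦ discountedKoopman φ η t h x) atTop (𝓝 (discountedLimit φ η p h x)) ∧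
      ∀ τ > 0,
        (∀ k : ℕ, (discountedKoopman φ η τ)^[k] h x = discountedKoopman φ η (k * τ) h x) ∧
        Tendsto (fun k : ℕ ↦ (discountedKoopman φ η τ)^[k] h x) atTop
          (𝓝 (discountedLimit φ η p h x)) := by
  have hlim := discountedKoopman_tendsto_discountedLimit (hφadd x) (hint x) hη hN hm hηm hcont hbdd
  refine ⟨hlim, fun τ hτ ↦ ?_⟩
  have hiter := discountedKoopman_iterate (h := h) hφ0 hφadd hint hτ.le
  refine ⟨fun k ↦ congrFun (hiter k) x, ?_⟩
  simp only [hiter]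
  exact hlim.comp (tendsto_natCast_atTop_atTop.atTop_mul_const hτ)

end Semiflow

/-- for every bounded continuous `h` and every `x`, `(T_t h)(x) → U_h(x)` as
`t → ∞`; in particular for any fixed `Δt > 0` the iterates satisfy
`((T_{Δt})^k h)(x) = (T_{kΔt} h)(x) → U_h(x)` as `k → ∞`. -/
theorem zubovKoopman_tendsto_zubovU {n : ℕ}
    (f : EuclideanSpace ℝ (Fin n) → EuclideanSpace ℝ (Fin n))
    (φ : ℝ → EuclideanSpace ℝ (Fin n) → EuclideanSpace ℝ (Fin n))
    (xeq : EuclideanSpace ℝ (Fin n))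
    (hf : LocallyLipschitz f)
    (hφ0 : ∀ x, φ 0 x = x)
    (hφd : ∀ x, ∀ t ≥ (0:ℝ), HasDerivWithinAt (fun s => φ s x) (f (φ t x)) (Set.Ici 0) t)
    (hφadd : ∀ x, ∀ s ≥ (0:ℝ), ∀ t ≥ (0:ℝ), φ s (φ t x) = φ (t + s) x)
    (hfeq : f xeq = 0)
    (hstab : ∃ δ > (0:ℝ), ∃ M > (0:ℝ), ∃ c > (0:ℝ), ∀ x : EuclideanSpace ℝ (Fin n),
      ‖x - xeq‖ ≤ δ → ∀ t ≥ (0:ℝ), ‖φ t x - xeq‖ ≤ M * ‖x - xeq‖ * Real.exp (-c * t))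
    (η : EuclideanSpace ℝ (Fin n) → ℝ)
    (hη : LocallyLipschitz η) (hηnn : ∀ x, 0 ≤ η x)
    (hη0 : η xeq = 0) (hηpos : ∀ x, x ≠ xeq → 0 < η x)
    (hηinf : ∀ r > (0:ℝ), ∃ m > (0:ℝ), ∀ y, r ≤ ‖y - xeq‖ → m ≤ η y) :
    ∀ h : EuclideanSpace ℝ (Fin n) → ℝ, Continuous h → (∃ C, ∀ x, |h x| ≤ C) →
      ∀ x : EuclideanSpace ℝ (Fin n),
        Tendsto (fun t => zubovKoopman φ η t h x) atTop (𝓝 (zubovU φ η xeq h x)) ∧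
        ∀ Δt > (0:ℝ),
          (∀ k : ℕ, (zubovKoopman φ η Δt)^[k] h x = zubovKoopman φ η (k * Δt) h x) ∧
          Tendsto (fun k : ℕ => (zubovKoopman φ η Δt)^[k] h x) atTop
            (𝓝 (zubovU φ η xeq h x)) := by
  obtain ⟨δ, hδ, M, -, c, hc, hexp⟩ := hstab
  obtain ⟨m, hm, hηm⟩ := hηinf δ hδ
  have hcost : ∀ x, ContinuousOn (fun t ↦ η (φ t x)) (Set.Ici 0) := fun x ↦
    hη.continuous.comp_continuousOn fun t ht ↦ (hφd x t ht).continuousWithinAt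
  have hint : ∀ x, ∀ t ≥ 0, IntervalIntegrable (fun r ↦ η (φ r x)) volume 0 t := fun x t ht ↦
    ((hcost x).mono Set.Icc_subset_Ici_self).intervalIntegrable_of_Icc ht
  have hattr : ∀ y ∈ {y | ‖y - xeq‖ ≤ δ}, Tendsto (fun t ↦ φ t y) atTop (𝓝 xeq) := fun y hy ↦
    tendsto_of_norm_sub_le_mul_exp hc (hexp y hy)
  exact fun h hcont hbdd ↦ zubovKoopman_tendsto_zubovU_general hφ0 hφadd hint hηnn hattr hm
    (fun y hy ↦ hηm y (not_le.1 hy).le) hcont.continuousAt hbdd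
end
end
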